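/- arXiv:2202.01913 — 2 statements merged into one kernel-verified Lean document; each statement's English description precedes it below -/
import Mathlib

section
/- Let H be a nonempty set, α ∈ [0,1), and ε ≥ 0. Let e, e_U, e_W : H → [0,1] be functions, and define e_S : H → ℝ by e_S(h) = (1−α)·e_U(h) + α·e_W(h). Suppose |e(h) − e_U(h)| ≤ ε/2 for every h ∈ H, and suppose ĥ ∈ H satisfies e_S(ĥ) ≤ e_S(h) for every h ∈ H. Then e(ĥ) ≤ inf_{h ∈ H} e(h) + ε + α/(1−α). -/
/-!
Passing from one hypothesis to another changes the term `α * eW` by at most `α`, so a minimizer of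
`eS` minimizes `eU` up to `α / (1 - α)`. Trading `eU` for `e` costs `ε / 2` at each of the two
hypotheses compared. The resulting bound holds against every `h`, so it also shows that `e` is
bounded below and passes to the infimum.
-/

theorem le_add_div_of_weighted_add_le {K : Type*} [Field K] [LinearOrder K] [IsStrictOrderedRing K]
    {a b u u' w w' B : K} (ha : 0 < a) (hb : 0 ≤ b) (hw : w' - w ≤ B)
    (h : a * u + b * w ≤ a * u' + b * w') : u ≤ u' + b * B / a := by
  rw [← sub_le_iff_le_add', le_div_iff₀' ha]
  calc a * (u - u') ≤ b * (w' - w) := by linarith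
    _ ≤ b * B := mul_le_mul_of_nonneg_left hw hb

theorem le_add_add_of_abs_sub_le {G : Type*} [AddCommGroup G] [LinearOrder G] [IsOrderedAddMonoid G]
    {x x' y y' c δ δ' : G} (hx : |x - x'| ≤ δ) (hy : |y - y'| ≤ δ') (h : x' ≤ y' + c) :
    x ≤ y + (δ + δ') + c :=
  calc x ≤ x' + δ := sub_le_iff_le_add'.mp (le_of_abs_le hx)
    _ ≤ y' + c + δ := by gcongr
    _ ≤ y + δ' + c + δ := by
      gcongr
      exact sub_le_iff_le_add'.mp (le_of_abs_le (abs_sub_comm y y' ▸ hy))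
    _ = y + (δ + δ') + c := by abel

theorem agnostic_erm_fallback_general {H : Type*} {α ε B : ℝ} (hα0 : 0 ≤ α) (hα1 : α < 1)
    {e eU eW eS : H → ℝ} (heS : ∀ h, eS h = (1 - α) * eU h + α * eW h)
    (hclose : ∀ h, |e h - eU h| ≤ ε / 2) {hhat : H} (hW : ∀ h, eW h - eW hhat ≤ B)
    (hERM : ∀ h, eS hhat ≤ eS h) :
    e hhat ≤ (⨅ h, e h) + ε + α * B / (1 - α) := by
  have hU (h : H) : eU hhat ≤ eU h + α * B / (1 - α) :=
    le_add_div_of_weighted_add_le (sub_pos.mpr hα1) hα0 (hW h) (by simpa only [heS] using hERM h)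
  have he (h : H) : e hhat ≤ e h + ε + α * B / (1 - α) := by
    simpa only [add_halves] using le_add_add_of_abs_sub_le (hclose hhat) (hclose h) (hU h)
  have : Nonempty H := ⟨hhat⟩
  simp only [← sub_le_iff_le_add] at he ⊢
  exact le_ciInf he

/-- Deterministic core of Theorem 3 (agnostic fallback guarantee of TCTbase):
if the sample error on the full set is `e_S = (1−α)·e_U + α·e_W`, the unbiased
sample errors `e_U` are uniformly `ε/2`-close to the true errors `e`, and `ĥ`
minimizes `e_S`, then `e(ĥ) ≤ inf_h e(h) + ε + α/(1−α)`. -/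
theorem agnostic_erm_fallback {H : Type*} [Nonempty H]
    (α ε : ℝ) (hα0 : 0 ≤ α) (hα1 : α < 1) (hε : 0 ≤ ε)
    (e eU eW : H → ℝ)
    (he : ∀ h, 0 ≤ e h ∧ e h ≤ 1)
    (heU : ∀ h, 0 ≤ eU h ∧ eU h ≤ 1)
    (heW : ∀ h, 0 ≤ eW h ∧ eW h ≤ 1)
    (eS : H → ℝ) (heS : ∀ h, eS h = (1 - α) * eU h + α * eW h)
    (hclose : ∀ h, |e h - eU h| ≤ ε / 2)
    (hhat : H) (hERM : ∀ h, eS hhat ≤ eS h) :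
    e hhat ≤ (⨅ h, e h) + ε + α / (1 - α) := by
  have hW (h : H) : eW h - eW hhat ≤ 1 := by linarith [(heW h).2, (heW hhat).1]
  simpa only [mul_one] using agnostic_erm_fallback_general hα0 hα1 heS hclose hW hERM
end

section
/- (Claim 2.) Let (Ω, 𝓕, P) be a probability space with a filtration (𝓕_i)_{i ∈ ℕ}, and let R ≥ 10 be an integer. For each integer i with ⌈2R/3⌉ ≤ i ≤ R, let B_i be an 𝓕_i-measurable random variable taking values in {0,1} with E[B_i | 𝓕_{i−1}] ≤ e^{−2^{3i/4}} almost surely. Then P( Σ_{i=⌈2R/3⌉}^{R} B_i ≥ R/6 ) ≤ e^{−2^{R/2}}. -/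
open MeasureTheory Finset

/-!
The rounds are so unlikely to be bad that Markov's inequality for the number of bad rounds is
enough; no martingale concentration is needed.

Write `q = exp (-2 ^ (R / 2))` and `a = ⌈2R/3⌉`. As `3a/4 ≥ R/2`, the expectation of `B_a` is at
most `q`. In each of the at most `R/3` later rounds the inner exponent has grown by a further `3/4`,
which multiplies `2 ^ (R / 2) ≥ 8` by more than `3/2`, so the expectation of `B_i` is at most
`exp (-4) * q ≤ q / 16`. Hence Markov's inequality bounds the probability by
`(6 / R) * (q + (R / 3) * (q / 16)) = (6 / R + 1 / 8) * q`, which is at most `q` for `R ≥ 7`. For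
`R = 6` already the first round may contribute all of `q`.
-/

section Expectation

variable {Ω : Type*} {m m0 : MeasurableSpace Ω} {μ : Measure Ω}

lemma measure_le_sum_le_ofReal_sum_integral_div {ι : Type*} {s : Finset ι} {f : ι → Ω → ℝ} {t : ℝ}
    (ht : 0 < t) (hf : ∀ i ∈ s, Integrable (f i) μ) (hf0 : ∀ i ∈ s, 0 ≤ᵐ[μ] f i) :
    μ {ω | t ≤ ∑ i ∈ s, f i ω} ≤ ENNReal.ofReal ((∑ i ∈ s, ∫ ω, f i ω ∂μ) / t) := by
  have hint : Integrable (fun ω ↦ ∑ i ∈ s, f i ω) μ := integrable_finsetSum s hf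
  have hnonneg : 0 ≤ᵐ[μ] fun ω ↦ ∑ i ∈ s, f i ω := by
    filter_upwards [(Finset.eventually_all s).mpr hf0] with ω hω using sum_nonneg hω
  rw [← ENNReal.ofReal_toReal (hint.measure_ge_lt_top ht).ne, ← integral_finsetSum s hf]
  refine ENNReal.ofReal_le_ofReal ((le_div_iff₀' ht).mpr ?_)
  exact mul_meas_ge_le_integral_of_nonneg hnonneg hint t

lemma integral_le_integral_of_condExp_le (hm : m ≤ m0) [SigmaFinite (μ.trim hm)] {f g : Ω → ℝ}
    (hg : Integrable g μ) (hfg : μ[f | m] ≤ᵐ[μ] g) : ∫ ω, f ω ∂μ ≤ ∫ ω, g ω ∂μ :=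
  calc ∫ ω, f ω ∂μ = ∫ ω, (μ[f | m]) ω ∂μ := (integral_condExp hm).symm
    _ ≤ ∫ ω, g ω ∂μ := integral_mono_ae integrable_condExp hg hfg

end Expectation

section DoublyExponentialDecay

variable {x y : ℝ}

lemma exp_neg_two_rpow_le_of_le (hxy : x ≤ y) :
    Real.exp (-(2 : ℝ) ^ y) ≤ Real.exp (-(2 : ℝ) ^ x) :=
  Real.exp_le_exp.mpr (neg_le_neg (Real.rpow_le_rpow_of_exponent_le one_le_two hxy))

lemma two_rpow_mul_three_halves_le (hxy : x + 3 / 4 ≤ y) :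
    (2 : ℝ) ^ x * (3 / 2) ≤ (2 : ℝ) ^ y := by
  have hbase : (3 / 2 : ℝ) ≤ (2 : ℝ) ^ (3 / 4 : ℝ) := by
    refine le_of_pow_le_pow_left₀ four_ne_zero (by positivity) ?_
    rw [← Real.rpow_mul_natCast zero_le_two]
    norm_num
  calc (2 : ℝ) ^ x * (3 / 2) ≤ (2 : ℝ) ^ x * (2 : ℝ) ^ (3 / 4 : ℝ) := by gcongr
    _ = (2 : ℝ) ^ (x + 3 / 4) := (Real.rpow_add two_pos _ _).symm
    _ ≤ (2 : ℝ) ^ y := Real.rpow_le_rpow_of_exponent_le one_le_two hxy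

lemma exp_neg_two_rpow_le_div_sixteen (hx : 3 ≤ x) (hxy : x + 3 / 4 ≤ y) :
    Real.exp (-(2 : ℝ) ^ y) ≤ Real.exp (-(2 : ℝ) ^ x) / 16 := by
  have hx8 : (8 : ℝ) ≤ (2 : ℝ) ^ x :=
    calc (8 : ℝ) = (2 : ℝ) ^ (3 : ℝ) := by norm_num
      _ ≤ (2 : ℝ) ^ x := Real.rpow_le_rpow_of_exponent_le one_le_two hx
  have hexp : (16 : ℝ) ≤ Real.exp 4 :=
    calc (16 : ℝ) = (1 + 1) ^ 4 := by norm_num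
      _ ≤ Real.exp 1 ^ 4 := by gcongr; exact Real.add_one_le_exp 1
      _ = Real.exp 4 := by rw [← Real.exp_nat_mul]; norm_num
  calc Real.exp (-(2 : ℝ) ^ y) ≤ Real.exp (-(2 : ℝ) ^ x - 4) :=
        Real.exp_le_exp.mpr (by linarith [two_rpow_mul_three_halves_le hxy])
    _ = Real.exp (-(2 : ℝ) ^ x) / Real.exp 4 := Real.exp_sub _ _
    _ ≤ Real.exp (-(2 : ℝ) ^ x) / 16 := by gcongr

lemma sum_exp_neg_two_rpow_le {R : ℕ} (hR : 7 ≤ R) :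
    ∑ i ∈ Icc ⌈(2 * (R : ℝ)) / 3⌉₊ R, Real.exp (-(2 : ℝ) ^ ((3 * (i : ℝ)) / 4)) ≤
      (R : ℝ) / 6 * Real.exp (-(2 : ℝ) ^ ((R : ℝ) / 2)) := by
  set a : ℕ := ⌈(2 * (R : ℝ)) / 3⌉₊
  set q : ℝ := Real.exp (-(2 : ℝ) ^ ((R : ℝ) / 2))
  have hR7 : (7 : ℝ) ≤ R := by exact_mod_cast hR
  have ha : 2 * (R : ℝ) / 3 ≤ a := Nat.le_ceil _
  have haR : a ≤ R := Nat.ceil_le.mpr (by linarith)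
  have hfirst : Real.exp (-(2 : ℝ) ^ ((3 * (a : ℝ)) / 4)) ≤ q :=
    exp_neg_two_rpow_le_of_le (by linarith)
  have hlater : ∀ i ∈ Ioc a R, Real.exp (-(2 : ℝ) ^ ((3 * (i : ℝ)) / 4)) ≤ q / 16 := by
    intro i hi
    have hai : (a : ℝ) + 1 ≤ i := by exact_mod_cast (mem_Ioc.mp hi).1
    exact exp_neg_two_rpow_le_div_sixteen (by linarith) (by linarith)
  calc ∑ i ∈ Icc a R, Real.exp (-(2 : ℝ) ^ ((3 * (i : ℝ)) / 4))
      = Real.exp (-(2 : ℝ) ^ ((3 * (a : ℝ)) / 4)) +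
          ∑ i ∈ Ioc a R, Real.exp (-(2 : ℝ) ^ ((3 * (i : ℝ)) / 4)) :=
        (add_sum_Ioc_eq_sum_Icc haR).symm
    _ ≤ q + ∑ _i ∈ Ioc a R, q / 16 := add_le_add hfirst (sum_le_sum hlater)
    _ = q + ((R : ℝ) - a) * (q / 16) := by
        rw [sum_const, Nat.card_Ioc, nsmul_eq_mul, Nat.cast_sub haR]
    _ ≤ q + (R : ℝ) / 3 * (q / 16) := by gcongr; linarith
    _ = (1 + (R : ℝ) / 48) * q := by ring
    _ ≤ (R : ℝ) / 6 * q := by gcongr; linarith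

end DoublyExponentialDecay

theorem claim2_bad_rounds_general {Ω : Type*} {m0 : MeasurableSpace Ω} (P : Measure Ω)
    (R : ℕ) (hR : 7 ≤ R) (B : ℕ → Ω → ℝ)
    (hint : ∀ i ∈ Icc ⌈(2 * (R : ℝ)) / 3⌉₊ R, Integrable (B i) P)
    (hnonneg : ∀ i ∈ Icc ⌈(2 * (R : ℝ)) / 3⌉₊ R, 0 ≤ᵐ[P] B i)
    (hmean : ∀ i ∈ Icc ⌈(2 * (R : ℝ)) / 3⌉₊ R,
      ∫ ω, B i ω ∂P ≤ Real.exp (-(2 : ℝ) ^ ((3 * (i : ℝ)) / 4))) :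
    P {ω | (R : ℝ) / 6 ≤ ∑ i ∈ Icc ⌈(2 * (R : ℝ)) / 3⌉₊ R, B i ω}
      ≤ ENNReal.ofReal (Real.exp (-(2 : ℝ) ^ ((R : ℝ) / 2))) := by
  have hR6 : (0 : ℝ) < (R : ℝ) / 6 := by positivity
  refine (measure_le_sum_le_ofReal_sum_integral_div hR6 hint hnonneg).trans ?_
  refine ENNReal.ofReal_le_ofReal ((div_le_iff₀' hR6).mpr ?_)
  exact (sum_le_sum hmean).trans (sum_exp_neg_two_rpow_le hR)

/-- Claim 2 of the paper: if `B_i` (for `⌈2R/3⌉ ≤ i ≤ R`, `R ≥ 10`) are `{0,1}`-valued,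
adapted, with `E[B_i | 𝓕_{i−1}] ≤ e^{−2^{3i/4}}` a.s., then
`P(∑_{i=⌈2R/3⌉}^{R} B_i ≥ R/6) ≤ e^{−2^{R/2}}`. -/
theorem claim2_bad_rounds
    {Ω : Type*} {m0 : MeasurableSpace Ω} (P : Measure Ω) [IsProbabilityMeasure P]
    (ℱ : Filtration ℕ m0) (R : ℕ) (hR : 10 ≤ R) (B : ℕ → Ω → ℝ)
    (hadapted : ∀ i ∈ Finset.Icc ⌈(2 * (R : ℝ)) / 3⌉₊ R, StronglyMeasurable[ℱ i] (B i))
    (h01 : ∀ i ∈ Finset.Icc ⌈(2 * (R : ℝ)) / 3⌉₊ R, ∀ ω, B i ω = 0 ∨ B i ω = 1)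
    (hcond : ∀ i ∈ Finset.Icc ⌈(2 * (R : ℝ)) / 3⌉₊ R,
      ∀ᵐ ω ∂P, (P[B i | ℱ (i - 1)]) ω ≤ Real.exp (-(2 : ℝ) ^ ((3 * (i : ℝ)) / 4))) :
    P {ω | (R : ℝ) / 6 ≤ ∑ i ∈ Finset.Icc ⌈(2 * (R : ℝ)) / 3⌉₊ R, B i ω}
      ≤ ENNReal.ofReal (Real.exp (-(2 : ℝ) ^ ((R : ℝ) / 2))) := by
  have hIcc : ∀ i ∈ Icc ⌈(2 * (R : ℝ)) / 3⌉₊ R, ∀ᵐ ω ∂P, B i ω ∈ Set.Icc (0 : ℝ) 1 :=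
    fun i hi ↦ .of_forall fun ω ↦ by rcases h01 i hi ω with h | h <;> simp [h]
  exact claim2_bad_rounds_general P R (by lia) B
    (fun i hi ↦ .of_mem_Icc 0 1 ((hadapted i hi).mono (ℱ.le i)).measurable.aemeasurable (hIcc i hi))
    (fun i hi ↦ (hIcc i hi).mono fun _ hω ↦ hω.1)
    (fun i hi ↦ by simpa using
      integral_le_integral_of_condExp_le (ℱ.le (i - 1)) (integrable_const _) (hcond i hi))
end
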